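/- arXiv:2007.12111 — 2 statements merged into one kernel-verified Lean document; each statement's English description precedes it below -/
import Mathlib

section
/- Let k be a positive integer and let G be a connected (k,2)-expander which contains no Hamilton cycle. Then G has at least (k+1)²/2 boosters. -/
/-- The external neighbourhood of a vertex set `U`: vertices outside `U` having a
neighbour in `U`. -/
def extNbhd {V : Type*} (G : SimpleGraph V) (U : Set V) : Set V :=
  {u | u ∉ U ∧ ∃ v ∈ U, G.Adj u v}

/-- A graph is a `(k,α)`-expander if `|N(U)| ≥ α|U|` for every vertex set `U` with
`|U| ≤ k`. -/
def IsExpander {V : Type*} (G : SimpleGraph V) (k α : ℝ) : Prop :=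
  ∀ U : Set V, (U.ncard : ℝ) ≤ k → α * (U.ncard : ℝ) ≤ ((extNbhd G U).ncard : ℝ)

/-- A non-edge `e` of `G` is a booster if adding it creates a graph which is either
Hamiltonian or whose longest path is longer than that of `G`. -/
def IsBooster {V : Type*} [DecidableEq V] (G : SimpleGraph V) (e : Sym2 V) : Prop :=
  ¬e.IsDiag ∧ e ∉ G.edgeSet ∧
    ((∃ (a : V) (w : (G ⊔ SimpleGraph.fromEdgeSet {e}).Walk a a), w.IsHamiltonianCycle) ∨
      ∃ (u v : V) (w : (G ⊔ SimpleGraph.fromEdgeSet {e}).Walk u v), w.IsPath ∧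
        ∀ (a b : V) (w' : G.Walk a b), w'.IsPath → w'.length < w.length)

namespace Posa

variable {V : Type*}

structure Longest (G : SimpleGraph V) (p : List V) : Prop where
  nodup : p.Nodup
  chain : p.IsChain G.Adj
  ne : p ≠ []
  max : ∀ q : List V, q.Nodup → q.IsChain G.Adj → q.length ≤ p.length

inductive Rot (G : SimpleGraph V) (p0 : List V) : List V → Prop
  | base : Rot G p0 p0
  | step (s t : List V) (x u : V) : Rot G p0 (s ++ t) → x ∈ s.head? → u ∈ t.head? → G.Adj x u →
      Rot G p0 (s.reverse ++ t)

def Nb (p : List V) (a u : V) : Prop := [a, u] <:+: p ∨ [u, a] <:+: p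

lemma infix_pair_append (s t : List V) (a b : V) : [a, b] <:+: s ++ t ↔
    [a, b] <:+: s ∨ [a, b] <:+: t ∨ (a ∈ s.getLast? ∧ b ∈ t.head?) := by
  rw [List.infix_append_iff_ne_nil]
  refine or_congr Iff.rfl (or_congr Iff.rfl ?_)
  constructor
  · rintro ⟨l₁, l₂, h1, h2, h, ⟨s', hs⟩, ⟨t', ht⟩⟩
    match l₁, l₂, h1, h2, h with
    | [c], [d], _, _, h =>
      simp at h
      obtain ⟨rfl, rfl⟩ := h
      subst hs; subst ht
      simp
    | c :: c' :: l, d :: l', _, _, h => simp at h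
    | [c], d :: d' :: l', _, _, h => simp at h
  · rintro ⟨h1, h2⟩
    refine ⟨[a], [b], by simp, by simp, by simp, ?_, ?_⟩
    · obtain ⟨l, rfl⟩ := List.getLast?_eq_some_iff.1 h1
      simp
    · obtain ⟨l, rfl⟩ := List.head?_eq_some_iff.1 h2
      simp

lemma nb_append (s t : List V) (a u : V) : Nb (s ++ t) a u ↔ Nb s a u ∨ Nb t a u ∨
    (a ∈ s.getLast? ∧ u ∈ t.head?) ∨ (u ∈ s.getLast? ∧ a ∈ t.head?) := by
  unfold Nb
  rw [infix_pair_append, infix_pair_append]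
  tauto

lemma nb_reverse (s : List V) (a u : V) : Nb s.reverse a u ↔ Nb s a u := by
  unfold Nb
  rw [← List.reverse_infix, ← List.reverse_infix (l₁ := [u, a])]
  simp
  tauto

lemma Rot.perm {G : SimpleGraph V} {p0 p : List V} (h : Rot G p0 p) : p.Perm p0 := by
  induction h with
  | base => exact List.Perm.refl _
  | step s t x u _ hx hu ha ih =>
    exact ((List.reverse_perm s).append_right t).trans ih

lemma Rot.last {G : SimpleGraph V} {p0 p : List V} (h : Rot G p0 p) :
    p.getLast? = p0.getLast? := by
  induction h with
  | base => rfl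
  | step s t x u _ hx hu ha ih =>
    rw [← ih]
    obtain ⟨l, rfl⟩ := List.head?_eq_some_iff.1 hu
    simp [List.getLast?_append, List.getLast?_cons]

lemma Rot.chain {G : SimpleGraph V} {p0 p : List V} (h : Rot G p0 p) (h0 : p0.IsChain G.Adj) :
    p.IsChain G.Adj := by
  induction h with
  | base => exact h0
  | step s t x u _ hx hu ha ih =>
    rw [List.isChain_append] at ih ⊢
    refine ⟨?_, ih.2.1, ?_⟩
    · rw [List.isChain_reverse]
      exact ih.1.imp fun a b h => h.symm
    · intro a hb b hb'
      simp at hb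
      simp_all

lemma Rot.longest {G : SimpleGraph V} {p0 p : List V} (h : Rot G p0 p) (h0 : Longest G p0) :
    Longest G p where
  nodup := h.perm.nodup_iff.2 h0.nodup
  chain := h.chain h0.chain
  ne := fun hp => h0.ne (by have := h.perm; subst hp; exact this.symm.eq_nil)
  max := fun q h1 h2 => by rw [h.perm.length_eq]; exact h0.max q h1 h2

lemma Longest.reverse {G : SimpleGraph V} {p : List V} (h : Longest G p) :
    Longest G p.reverse where
  nodup := by simpa using h.nodup
  chain := by
    rw [List.isChain_reverse]
    exact h.chain.imp fun a b h => h.symm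
  ne := by simpa using h.ne
  max := by simpa using h.max

def R (G : SimpleGraph V) (p0 : List V) : Set V := {x | ∃ p, Rot G p0 p ∧ x ∈ p.head?}

lemma Rot.nb {G : SimpleGraph V} {p0 p : List V} (h : Rot G p0 p) (u : V) (hu : u ∉ R G p0)
    (hn : ∀ a ∈ R G p0, ¬ Nb p0 a u) (a : V) : Nb p a u ↔ Nb p0 a u := by
  induction h generalizing a with
  | base => rfl
  | step s t x v hr hx hv ha ih =>
    rw [← ih a]
    have hr' := Rot.step s t x v hr hx hv ha
    have hxR : x ∈ R G p0 := ⟨_, hr, by simp_all [List.head?_append]⟩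
    obtain ⟨w, hw⟩ : ∃ w, w ∈ s.getLast? := by
      obtain ⟨l, rfl⟩ := List.head?_eq_some_iff.1 hx
      exact ⟨_, List.getLast?_eq_some_getLast (by simp)⟩
    have hwR : w ∈ R G p0 := ⟨_, hr', by simp_all [List.head?_append]⟩
    have hux : u ≠ x := fun h => hu (h ▸ hxR)
    have huw : u ≠ w := fun h => hu (h ▸ hwR)
    have huv : u ≠ v := by
      rintro rfl
      refine hn w hwR ((ih w).1 ?_)
      rw [nb_append]
      exact Or.inr (Or.inr (Or.inl ⟨hw, hv⟩))
    rw [nb_append, nb_append, nb_reverse]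
    simp only [List.getLast?_reverse, Option.mem_def] at *
    rw [hx, hv, hw]
    simp [hux.symm, huw.symm, huv.symm]

lemma nbhd_R {G : SimpleGraph V} {p0 : List V} (h0 : Longest G p0) (u : V)
    (hu : u ∈ extNbhd G (R G p0)) : ∃ a ∈ R G p0, Nb p0 a u := by
  obtain ⟨hu, v, ⟨p, hp, hv⟩, hadj⟩ := hu
  by_contra! hn
  have hl := hp.longest h0
  have hup : u ∈ p := by
    by_contra hup
    have := hl.max (u :: p) (List.nodup_cons.2 ⟨hup, hl.nodup⟩) (by
      rw [List.isChain_cons]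
      refine ⟨?_, hl.chain⟩
      intro y hy
      simp_all)
    simp at this
  obtain ⟨s, t, rfl⟩ := List.append_of_mem hup
  have hs : s ≠ [] := by
    rintro rfl
    simp at hv
    subst hv
    exact hadj.ne rfl
  have hvs : v ∈ s.head? := by
    cases s <;> simp_all
  have hw : s.getLast hs ∈ s.getLast? := List.getLast?_eq_some_getLast hs
  have hwR : s.getLast hs ∈ R G p0 :=
    ⟨_, Rot.step s (u :: t) v u hp hvs (by simp) hadj.symm, by
      simp only [List.head?_append, List.head?_reverse, Option.mem_def] at *
      rw [hw]; rfl⟩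
  refine hn _ hwR ((hp.nb u hu hn _).1 ?_)
  rw [nb_append]
  exact Or.inr (Or.inr (Or.inl ⟨hw, by simp⟩))

lemma nbhd_card [Fintype V] [DecidableEq V] {G : SimpleGraph V} {p0 : List V}
    (h0 : Longest G p0) : (extNbhd G (R G p0)).ncard < 2 * (R G p0).ncard := by
  obtain ⟨x, l, rfl⟩ := List.exists_cons_of_ne_nil h0.ne
  have hx : x ∈ R G (x :: l) := ⟨_, Rot.base, by simp⟩
  set p0 := x :: l with hp0
  let f : V → V := fun a => p0.getD (p0.idxOf a + 1) x
  let g : V → V := fun a => p0.getD (p0.idxOf a - 1) x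
  have hsub : extNbhd G (R G p0) ⊆ f '' (R G p0) ∪ g '' (R G p0 \ {x}) := by
    intro u hu
    obtain ⟨a, ha, hn | hn⟩ := nbhd_R h0 u hu
    · left
      refine ⟨a, ha, ?_⟩
      obtain ⟨s, t, h⟩ := hn
      have hnd := h0.nodup
      have : a ∉ s := by
        rw [← h] at hnd
        simp [List.nodup_append] at hnd
        grind
      simp only [f]
      rw [← h]
      simp [List.idxOf_append, this]
    · right
      obtain ⟨s, t, h⟩ := hn
      have hnd := h0.nodup
      have h1 : a ∉ s ++ [u] := by
        rw [← h] at hnd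
        simp [List.nodup_append] at hnd
        grind
      refine ⟨a, ⟨ha, ?_⟩, ?_⟩
      · rintro rfl
        cases s <;> simp_all
      simp only [g]
      have h2 : p0 = (s ++ [u]) ++ (a :: t) := by simp [← h]
      rw [h2, List.idxOf_append]
      rw [if_neg h1]
      simp
  have h1 := Set.ncard_le_ncard hsub (Set.toFinite _)
  have h2 := Set.ncard_union_le (f '' (R G p0)) (g '' (R G p0 \ {x}))
  have h3 := Set.ncard_image_le (f := f) (Set.toFinite (R G p0))
  have h4 := Set.ncard_image_le (f := g) (Set.toFinite (R G p0 \ {x}))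
  have h5 := Set.ncard_diff_singleton_lt_of_mem hx (Set.toFinite _)
  omega

lemma close_up [DecidableEq V] {H : SimpleGraph V} (hc : H.Connected) {p : List V}
    (hnd : p.Nodup) (hch : p.IsChain H.Adj) (hlen : 3 ≤ p.length) {x y : V}
    (hx : x ∈ p.head?) (hy : y ∈ p.getLast?) (hadj : H.Adj x y) :
    (∃ (a : V) (w : H.Walk a a), w.IsHamiltonianCycle) ∨
      ∃ q : List V, q.Nodup ∧ q.IsChain H.Adj ∧ q.length = p.length + 1 := by
  by_cases hall : ∀ v, v ∈ p
  · left
    have hne : p ≠ [] := by rintro rfl; simp at hlen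
    let w := SimpleGraph.Walk.ofSupport p hne hch
    have hws : w.support = p := SimpleGraph.Walk.support_ofSupport hne hch
    have hwl : w.length = p.length - 1 := SimpleGraph.Walk.length_ofSupport hne hch
    have hx' : p.head hne = x := by
      rw [List.head?_eq_some_head hne] at hx; simpa using hx
    have hy' : p.getLast hne = y := by
      rw [List.getLast?_eq_some_getLast hne] at hy; simpa using hy
    have hadj' : H.Adj (p.getLast hne) (p.head hne) := by rw [hx', hy']; exact hadj.symm
    have hpath : w.IsPath := by rw [SimpleGraph.Walk.isPath_def, hws]; exact hnd
    refine ⟨_, SimpleGraph.Walk.cons hadj' w, ?_, ?_⟩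
    · rw [SimpleGraph.Walk.cons_isCycle_iff]
      refine ⟨hpath, ?_⟩
      intro he
      have := hpath.length_eq_one_of_mem_edges (Sym2.eq_swap ▸ he)
      omega
    · have : w.IsHamiltonian := hpath.isHamiltonian_of_mem (by rw [hws]; exact hall)
      intro a
      have h := this a
      simpa using h
  · right
    push Not at hall
    obtain ⟨u, hu⟩ := hall
    have hxp : x ∈ p := List.mem_of_mem_head? hx
    obtain ⟨W⟩ := hc.preconnected x u
    obtain ⟨d, -, hd1, hd2⟩ := W.exists_boundary_dart {v | v ∈ p} hxp hu
    obtain ⟨⟨v, u'⟩, hd⟩ := d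
    simp only [Set.mem_setOf_eq] at hd1 hd2 hd
    obtain ⟨s, t, rfl⟩ := List.append_of_mem hd1
    refine ⟨u' :: ((v :: t) ++ s), ?_, ?_, ?_⟩
    · rw [List.nodup_cons]
      refine ⟨?_, ?_⟩
      · intro h; apply hd2; simp at h ⊢; tauto
      · exact (List.perm_append_comm.nodup_iff).2 hnd
    · rw [List.isChain_cons]
      refine ⟨by simpa using hd.symm, ?_⟩
      rw [List.isChain_append] at hch ⊢
      refine ⟨hch.2.1, hch.1, ?_⟩
      intro a ha b hb
      have e1 : a = y := by
        rw [List.getLast?_append] at hy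
        rw [Option.mem_def] at ha
        rw [ha] at hy
        simpa using hy
      have e2 : b = x := by
        rw [List.head?_append] at hx
        rw [Option.mem_def] at hb
        rw [hb] at hx
        simpa using hx
      rw [e1, e2]
      exact hadj.symm
    · simp; omega

lemma booster [DecidableEq V] {G : SimpleGraph V} (hc : G.Connected)
    (hham : ¬∃ (a : V) (w : G.Walk a a), w.IsHamiltonianCycle) {p : List V} (h : Longest G p)
    (hlen : 3 ≤ p.length) {x y : V} (hx : x ∈ p.head?) (hy : y ∈ p.getLast?) :
    IsBooster G s(x, y) := by
  have hxy : x ≠ y := by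
    rintro rfl
    obtain ⟨l, rfl⟩ := List.head?_eq_some_iff.1 hx
    have hl : l ≠ [] := by rintro rfl; simp at hlen
    have := h.nodup
    rw [List.nodup_cons] at this
    apply this.1
    rw [List.getLast?_cons_of_ne_nil hl] at hy
    exact List.mem_of_getLast? hy
  refine ⟨by simpa using hxy, ?_, ?_⟩
  · intro hadj
    rw [SimpleGraph.mem_edgeSet] at hadj
    rcases close_up hc h.nodup h.chain hlen hx hy hadj with h' | ⟨q, h1, h2, h3⟩
    · exact hham h'
    · have := h.max q h1 h2
      omega
  · have hle : G ≤ G ⊔ SimpleGraph.fromEdgeSet {s(x, y)} := le_sup_left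
    rcases close_up (hc.mono hle) h.nodup (h.chain.imp fun a b h => hle h) hlen hx hy
      (by simp [hxy]) with h' | ⟨q, h1, h2, h3⟩
    · exact Or.inl h'
    · right
      have hq : q ≠ [] := by rintro rfl; simp at h3
      refine ⟨_, _, SimpleGraph.Walk.ofSupport q hq h2, ?_, ?_⟩
      · rw [SimpleGraph.Walk.isPath_def, SimpleGraph.Walk.support_ofSupport]; exact h1
      · intro a b w' hw'
        have := h.max w'.support hw'.support_nodup w'.isChain_adj_support
        rw [SimpleGraph.Walk.length_support] at this
        rw [SimpleGraph.Walk.length_ofSupport]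
        omega

lemma exists_longest [Fintype V] [Nonempty V] (G : SimpleGraph V) : ∃ p, Longest G p := by
  classical
  obtain ⟨v⟩ := ‹Nonempty V›
  let P : ℕ → Prop := fun n => ∃ p : List V, p.Nodup ∧ p.IsChain G.Adj ∧ p.length = n
  have h1 : P 1 := ⟨[v], by simp, by simp, by simp⟩
  have hb : ∀ n, P n → n ≤ Fintype.card V := by
    rintro n ⟨p, hp, -, rfl⟩
    exact hp.length_le_card
  have hm := Nat.findGreatest_spec (P := P) (hb 1 h1) h1
  have hge := Nat.le_findGreatest (P := P) (hb 1 h1) h1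
  obtain ⟨p, hp1, hp2, hp3⟩ := hm
  refine ⟨p, hp1, hp2, ?_, ?_⟩
  · rintro rfl
    simp at hp3
    omega
  · intro q hq1 hq2
    rw [hp3]
    exact Nat.le_findGreatest (hb _ ⟨q, hq1, hq2, rfl⟩) ⟨q, hq1, hq2, rfl⟩

lemma R_card [Fintype V] [DecidableEq V] {G : SimpleGraph V} {k : ℕ}
    (hexp : IsExpander G (k : ℝ) 2) {p : List V} (h : Longest G p) :
    k + 1 ≤ (R G p).ncard := by
  by_contra! hlt
  have h1 := hexp (R G p) (by exact_mod_cast (by omega : (R G p).ncard ≤ k))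
  have h2 := nbhd_card h
  have h3 : 2 * (R G p).ncard ≤ (extNbhd G (R G p)).ncard := by exact_mod_cast h1
  omega

lemma three_le [Fintype V] [DecidableEq V] {G : SimpleGraph V} {k : ℕ} (hk : 1 ≤ k)
    (hexp : IsExpander G (k : ℝ) 2) {p : List V} (h : Longest G p) : 3 ≤ p.length := by
  obtain ⟨v, l, rfl⟩ := List.exists_cons_of_ne_nil h.ne
  have h1 := hexp {v} (by simpa using hk)
  simp only [Set.ncard_singleton] at h1
  have h2 : 1 < (extNbhd G {v}).ncard := by
    have : 2 ≤ (extNbhd G {v}).ncard := by exact_mod_cast (by simpa using h1)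
    omega
  obtain ⟨b, hb, c, hc, hbc⟩ := (Set.one_lt_ncard (Set.toFinite _)).1 h2
  obtain ⟨hb1, w, hw, hb2⟩ := hb
  obtain ⟨hc1, w', hw', hc2⟩ := hc
  simp only [Set.mem_singleton_iff] at *
  subst w; subst w'
  have := h.max [b, v, c] (by simp [hb1, hbc, Ne.symm hc1]) (by simp [hb2, hc2.symm])
  simpa using this

end Posa

/-- **Lemma (expanders have many boosters).** A connected `(k,2)`-expander with no
Hamilton cycle has at least `(k+1)²/2` boosters. -/
theorem expander_many_boosters
    {V : Type*} [Fintype V] [DecidableEq V] (G : SimpleGraph V) (k : ℕ) (hk : 1 ≤ k)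
    (hconn : G.Connected) (hexp : IsExpander G (k : ℝ) 2)
    (hham : ¬∃ (a : V) (w : G.Walk a a), w.IsHamiltonianCycle) :
    ((k + 1 : ℝ) ^ 2 / 2) ≤ ({e : Sym2 V | IsBooster G e}.ncard : ℝ) := by

  classical
  haveI := hconn.nonempty
  obtain ⟨p, hp⟩ := Posa.exists_longest G
  have key : ∀ v ∈ Posa.R G p, ∃ q, Posa.Longest G q ∧ q.getLast? = some v := by
    rintro v ⟨q, hq, hv⟩
    refine ⟨q.reverse, (hq.longest hp).reverse, by simpa using hv⟩
  choose! Q hQ1 hQ2 using key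
  let S : Finset V := (Posa.R G p).toFinset
  let T : V → Finset V := fun v => (Posa.R G (Q v)).toFinset
  let D : Finset (Σ _ : V, V) := S.sigma T
  have hS : k + 1 ≤ S.card := by
    have := Posa.R_card hexp hp
    rwa [Set.ncard_eq_toFinset_card'] at this
  have hT : ∀ v ∈ S, k + 1 ≤ (T v).card := by
    intro v hv
    have := Posa.R_card hexp (hQ1 v (by simpa [S] using hv))
    rwa [Set.ncard_eq_toFinset_card'] at this
  have hD : (k + 1) * (k + 1) ≤ D.card := by
    rw [Finset.card_sigma]
    calc (k + 1) * (k + 1) ≤ S.card * (k + 1) := Nat.mul_le_mul_right _ hS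
      _ = ∑ v ∈ S, (k + 1) := by simp
      _ ≤ _ := Finset.sum_le_sum hT
  have hle : D.card ≤ 2 * ({e : Sym2 V | IsBooster G e}.toFinset).card := by
    refine Finset.card_le_mul_card_image_of_maps_to (f := fun d => s(d.2, d.1)) ?_ 2 ?_
    · rintro ⟨v, z⟩ hd
      simp only [D, S, T, Finset.mem_sigma, Set.mem_toFinset] at hd
      obtain ⟨hv, q, hq, hz⟩ := hd
      have hql := hq.longest (hQ1 v hv)
      simp only [Set.mem_toFinset, Set.mem_setOf_eq]
      exact Posa.booster hconn hham hql (Posa.three_le hk hexp hql) hz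
        (by rw [hq.last, hQ2 v hv]; rfl)
    · intro e _
      induction e using Sym2.ind with
      | _ a b =>
        refine (Finset.card_le_card (t := {⟨a, b⟩, ⟨b, a⟩}) ?_).trans Finset.card_le_two
        rintro ⟨v, z⟩ hd
        simp only [Finset.mem_filter, Sym2.eq_iff] at hd
        rcases hd.2 with ⟨rfl, rfl⟩ | ⟨rfl, rfl⟩ <;> simp
  rw [Set.ncard_eq_toFinset_card']
  have : (k + 1) * (k + 1) ≤ 2 * ({e : Sym2 V | IsBooster G e}.toFinset).card := hD.trans hle
  have h' : ((k : ℝ) + 1) * (k + 1) ≤ 2 * (({e : Sym2 V | IsBooster G e}.toFinset).card : ℝ) := by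
    exact_mod_cast this
  nlinarith
end

section
/- Let m, d ≥ 1 be integers and let H be a graph on h ≥ 4m vertices satisfying: (1) every vertex of H has degree at least 2; (2) no vertex v of H with degree less than d is contained in a cycle of length 3 or 4, and any two distinct vertices of H each of degree less than d are at graph distance at least 5 from each other; (3) every set U ⊆ V(H) with |U| ≤ 5m spans at most d|U|/10 edges of H; (4) for every pair of disjoint sets U_1, U_2 ⊆ V(H) with |U_1| = |U_2| = m there is an edge of H between U_1 and U_2. Then H is an (h/4, 2)-expander, i.e. every set U ⊆ V(H) with |U| ≤ h/4 satisfies |N_H(U)| ≥ 2|U|. -/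
lemma aux_tri {V : Type*} (H : SimpleGraph V) {a b c : V} (hab : H.Adj a b) (hbc : H.Adj b c)
    (hca : H.Adj c a) : ∃ (u : V) (w : H.Walk u u), w.IsCycle ∧ (w.length = 3 ∨ w.length = 4) ∧
        a ∈ w.support := by
  refine ⟨a, .cons hab (.cons hbc (.cons hca .nil)), ?_, by simp, by simp⟩
  have := hab.ne; have := hbc.ne; have := hca.ne
  rw [SimpleGraph.Walk.cons_isCycle_iff]
  constructor
  · simp [SimpleGraph.Walk.cons_isPath_iff]; grind
  · simp; grind

lemma aux_quad {V : Type*} (H : SimpleGraph V) {a b c e : V} (hab : H.Adj a b) (hbc : H.Adj b c)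
    (hce : H.Adj c e) (hea : H.Adj e a) (hac : a ≠ c) (hbe : b ≠ e) :
    ∃ (u : V) (w : H.Walk u u), w.IsCycle ∧ (w.length = 3 ∨ w.length = 4) ∧
        a ∈ w.support := by
  refine ⟨a, .cons hab (.cons hbc (.cons hce (.cons hea .nil))), ?_, by simp, by simp⟩
  have := hab.ne; have := hbc.ne; have := hce.ne; have := hea.ne
  rw [SimpleGraph.Walk.cons_isCycle_iff]
  constructor
  · simp [SimpleGraph.Walk.cons_isPath_iff]; grind
  · simp; grind

/-- degree sum inside a set -/
lemma aux_edges {V : Type*} [Fintype V] [DecidableEq V] (H : SimpleGraph V) [DecidableRel H.Adj]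
    (T W : Finset V) (hTW : T ⊆ W) (k : ℕ) (hk : ∀ v ∈ T, k ≤ (H.neighborFinset v ∩ W).card) :
    k * T.card ≤ 2 * ({e ∈ H.edgeSet | ∀ v ∈ e, v ∈ W}).ncard := by
  classical
  let G : SimpleGraph V :=
    { Adj := fun a b => H.Adj a b ∧ a ∈ W ∧ b ∈ W
      symm := ⟨fun a b h => ⟨h.1.symm, h.2.2, h.2.1⟩⟩
      loopless := ⟨fun a h => H.loopless.irrefl a h.1⟩ }
  have hE : {e ∈ H.edgeSet | ∀ v ∈ e, v ∈ W} = (G.edgeFinset : Set (Sym2 V)) := by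
    ext e
    induction e using Sym2.ind with
    | _ a b => simp [G]
  rw [hE, Set.ncard_coe_finset, ← G.sum_degrees_eq_twice_card_edges]
  calc k * T.card = ∑ v ∈ T, k := by simp [mul_comm]
    _ ≤ ∑ v ∈ T, G.degree v := by
        apply Finset.sum_le_sum
        intro v hv
        refine (hk v hv).trans (Finset.card_le_card ?_)
        intro x hx
        simp at hx
        simp [G, hx, hTW hv]
    _ ≤ ∑ v, G.degree v := Finset.sum_le_sum_of_subset (Finset.subset_univ _)

lemma aux_small {V : Type*} [Fintype V] [DecidableEq V] (H : SimpleGraph V) [DecidableRel H.Adj]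
    (m d : ℕ) (hm : 1 ≤ m)
    (h1 : ∀ v : V, 2 ≤ H.degree v)
    (h2a : ∀ v : V, H.degree v < d →
      ¬∃ (u : V) (w : H.Walk u u), w.IsCycle ∧ (w.length = 3 ∨ w.length = 4) ∧
        v ∈ w.support)
    (h2b : ∀ u v : V, u ≠ v → H.degree u < d → H.degree v < d →
      ∀ w : H.Walk u v, 5 ≤ w.length)
    (h3 : ∀ U : Finset V, U.card ≤ 5 * m →
      (({e ∈ H.edgeSet | ∀ v ∈ e, v ∈ U}).ncard : ℝ) ≤ (d : ℝ) * U.card / 10)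
    (U : Finset V) (hU : U.card ≤ m) :
    ∃ N : Finset V, (∀ x ∈ N, x ∉ U ∧ ∃ v ∈ U, H.Adj x v) ∧ 2 * U.card ≤ N.card := by
  classical
  have h3' : ∀ W : Finset V, W.card ≤ 5 * m →
      10 * ({e ∈ H.edgeSet | ∀ v ∈ e, v ∈ W}).ncard ≤ d * W.card := by
    intro W hW
    have := h3 W hW
    have h' : (10 : ℝ) * (({e ∈ H.edgeSet | ∀ v ∈ e, v ∈ W}).ncard : ℝ) ≤ (d : ℝ) * W.card := by
      linarith
    exact_mod_cast h'
  obtain ⟨S, hS⟩ : ∃ S, S = U.filter (fun v => H.degree v < d) := ⟨_, rfl⟩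
  obtain ⟨T, hT⟩ : ∃ T, T = U.filter (fun v => ¬ H.degree v < d) := ⟨_, rfl⟩
  have hST : S.card + T.card = U.card := by
    rw [hS, hT]; exact Finset.card_filter_add_card_filter_not _
  have mS : ∀ v, v ∈ S ↔ v ∈ U ∧ H.degree v < d := by intro v; simp [hS]
  have mT : ∀ v, v ∈ T ↔ v ∈ U ∧ ¬ H.degree v < d := by intro v; simp [hT]
  obtain ⟨NS, hNS⟩ : ∃ NS, NS = S.biUnion (fun v => H.neighborFinset v) := ⟨_, rfl⟩
  have mNS : ∀ v, v ∈ NS ↔ ∃ s ∈ S, H.Adj s v := by intro v; simp [hNS]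
  have dist : ∀ s ∈ S, ∀ t ∈ S, s ≠ t → ∀ w : H.Walk s t, 5 ≤ w.length :=
    fun s hs t ht hne w => h2b s t hne ((mS s).1 hs).2 ((mS t).1 ht).2 w
  have cNS : 2 * S.card ≤ NS.card := by
    rw [hNS, Finset.card_biUnion]
    · calc 2 * S.card = ∑ v ∈ S, 2 := by simp [mul_comm]
        _ ≤ _ := Finset.sum_le_sum (fun v _ => h1 v)
    · intro s hs t ht hne
      rw [Function.onFun, Finset.disjoint_left]
      intro x hx hy
      simp at hx hy
      have := dist s hs t ht hne (.cons hx (.cons hy.symm .nil))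
      simp at this
  have key : ∀ v ∉ S, (H.neighborFinset v ∩ (S ∪ NS)).card ≤ 1 := by
    intro v hv
    rw [Finset.card_le_one]
    intro x hx y hy
    simp only [Finset.mem_inter, Finset.mem_union, SimpleGraph.mem_neighborFinset, mNS] at hx hy
    obtain ⟨hvx, hx⟩ := hx
    obtain ⟨hvy, hy⟩ := hy
    by_contra hxy
    rcases hx with hx | ⟨s, hs, hsx⟩ <;> rcases hy with hy | ⟨t, ht, hty⟩
    · have := dist x hx y hy hxy (.cons hvx.symm (.cons hvy .nil))
      simp at this
    · by_cases h : x = t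
      · subst h
        exact h2a x ((mS x).1 hx).2 (aux_tri H hvx.symm hvy hty.symm)
      · have := dist x hx t ht h (.cons hvx.symm (.cons hvy (.cons hty.symm .nil)))
        simp at this
    · by_cases h : y = s
      · subst h
        exact h2a y ((mS y).1 hy).2 (aux_tri H hvy.symm hvx hsx.symm)
      · have := dist y hy s hs h (.cons hvy.symm (.cons hvx (.cons hsx.symm .nil)))
        simp at this
    · by_cases h : s = t
      · subst h
        exact h2a s ((mS s).1 hs).2
          (aux_quad H hsx hvx.symm hvy hty.symm (fun h => hv (h ▸ hs)) hxy)
      · have := dist s hs t ht h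
          (.cons hsx (.cons hvx.symm (.cons hvy (.cons hty.symm .nil))))
        simp at this
  obtain ⟨B, hB⟩ : ∃ B, B = T.biUnion (fun v => H.neighborFinset v) \ (S ∪ NS ∪ T) := ⟨_, rfl⟩
  have cB : 3 * T.card ≤ B.card := by
    by_contra hlt
    push Not at hlt
    have hTpos : 0 < T.card := by omega
    obtain ⟨v, hv⟩ := Finset.card_pos.1 hTpos
    have hd5 : 5 ≤ d := by
      have hv2 := h1 v
      obtain ⟨u, hu⟩ := Finset.card_pos.1 (show 0 < (H.neighborFinset v).card from by
        rw [SimpleGraph.card_neighborFinset_eq_degree]; omega)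
      rw [SimpleGraph.mem_neighborFinset] at hu
      have hc : ({v, u} : Finset V).card = 2 := Finset.card_pair hu.ne
      have a := h3' {v, u} (by omega)
      have b := aux_edges H {v, u} {v, u} subset_rfl 1 (by
        intro x hx
        rw [Nat.one_le_iff_ne_zero, ← Nat.pos_iff_ne_zero, Finset.card_pos]
        simp at hx
        rcases hx with rfl | rfl
        · exact ⟨u, by simp [hu]⟩
        · exact ⟨v, by simp [hu.symm]⟩)
      rw [hc] at a b
      omega
    have hdeg : ∀ v ∈ T, d - 1 ≤ (H.neighborFinset v ∩ (T ∪ B)).card := by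
      intro v hv
      have hvS : v ∉ S := fun h => ((mT v).1 hv).2 ((mS v).1 h).2
      have hk := key v hvS
      have hdv : d ≤ (H.neighborFinset v).card := by
        rw [SimpleGraph.card_neighborFinset_eq_degree]; exact not_lt.1 ((mT v).1 hv).2
      have hsub : H.neighborFinset v ⊆
          (H.neighborFinset v ∩ (S ∪ NS)) ∪ (H.neighborFinset v ∩ (T ∪ B)) := by
        intro x hx
        have : x ∈ T.biUnion (fun v => H.neighborFinset v) := Finset.mem_biUnion.2 ⟨v, hv, hx⟩
        simp only [hB, Finset.mem_union, Finset.mem_inter, Finset.mem_sdiff]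
        tauto
      have := (Finset.card_le_card hsub).trans (Finset.card_union_le _ _)
      omega
    have e1 := aux_edges H T (T ∪ B) Finset.subset_union_left (d-1) hdeg
    have hc := Finset.card_union_le T B
    have hTU : T.card ≤ m := by omega
    have e2 := h3' (T ∪ B) (by omega)
    obtain ⟨k, rfl⟩ : ∃ k, d = k + 5 := ⟨d - 5, by omega⟩
    have e3 : (k+5) * (T ∪ B).card ≤ (k+5) * (4 * T.card - 1) := Nat.mul_le_mul_left _ (by omega)
    obtain ⟨t, ht⟩ : ∃ t, T.card = t + 1 := ⟨T.card - 1, by omega⟩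
    rw [ht] at e1 e3
    rw [show 4 * (t+1) - 1 = 4 * t + 3 by omega] at e3
    rw [show k + 5 - 1 = k + 4 by omega] at e1
    nlinarith
  refine ⟨(NS \ T) ∪ B, ?_, ?_⟩
  · intro x hx
    rw [Finset.mem_union] at hx
    rcases hx with hx | hx
    · rw [Finset.mem_sdiff, mNS] at hx
      obtain ⟨⟨s, hs, hsx⟩, hxT⟩ := hx
      refine ⟨fun hxU => ?_, s, ((mS s).1 hs).1, hsx.symm⟩
      by_cases hd : H.degree x < d
      · have := dist s hs x ((mS x).2 ⟨hxU, hd⟩) hsx.ne (.cons hsx .nil)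
        simp at this
      · exact hxT ((mT x).2 ⟨hxU, hd⟩)
    · simp only [hB, Finset.mem_sdiff, Finset.mem_union, Finset.mem_biUnion,
        SimpleGraph.mem_neighborFinset] at hx
      obtain ⟨⟨v, hv, hvx⟩, hn⟩ := hx
      refine ⟨fun hxU => hn ?_, v, ((mT v).1 hv).1, hvx.symm⟩
      rw [mS, mT]
      tauto
  · have hdisj : Disjoint (NS \ T) B := by
      rw [Finset.disjoint_left]
      intro x hx hxB
      simp only [hB, Finset.mem_sdiff, Finset.mem_union] at hx hxB
      tauto
    rw [Finset.card_union_of_disjoint hdisj]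
    have := Finset.le_card_sdiff T NS
    omega

/-- **Lemma (sufficient conditions for expansion).**
Let `m, d ≥ 1` and let `H` be a graph on `h ≥ 4m` vertices such that:
(1) `δ(H) ≥ 2`; (2) no vertex of degree `< d` lies on a cycle of length 3 or 4, and
any two distinct vertices of degree `< d` are at distance at least 5;
(3) every `U` with `|U| ≤ 5m` spans at most `d|U|/10` edges; (4) there is an edge
between every two disjoint sets of `m` vertices each. Then `H` is an
`(h/4, 2)`-expander. -/
theorem expander_sufficient_conditions
    {V : Type*} [Fintype V] [DecidableEq V] (H : SimpleGraph V) [DecidableRel H.Adj]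
    (h m d : ℕ) (hh : Fintype.card V = h) (hm : 1 ≤ m) (hd : 1 ≤ d) (h4m : 4 * m ≤ h)
    (h1 : ∀ v : V, 2 ≤ H.degree v)
    (h2a : ∀ v : V, H.degree v < d →
      ¬∃ (u : V) (w : H.Walk u u), w.IsCycle ∧ (w.length = 3 ∨ w.length = 4) ∧
        v ∈ w.support)
    (h2b : ∀ u v : V, u ≠ v → H.degree u < d → H.degree v < d →
      ∀ w : H.Walk u v, 5 ≤ w.length)
    (h3 : ∀ U : Finset V, U.card ≤ 5 * m →
      (({e ∈ H.edgeSet | ∀ v ∈ e, v ∈ U}).ncard : ℝ) ≤ (d : ℝ) * U.card / 10)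
    (h4 : ∀ U₁ U₂ : Finset V, Disjoint U₁ U₂ → U₁.card = m → U₂.card = m →
      ∃ u ∈ U₁, ∃ v ∈ U₂, H.Adj u v) :
    IsExpander H ((h : ℝ) / 4) 2 := by
  classical
  intro U hU
  obtain ⟨U, rfl⟩ : ∃ F : Finset V, U = F := ⟨U.toFinset, by simp⟩
  rw [Set.ncard_coe_finset] at *
  have hU' : 4 * U.card ≤ h := by
    have : (4 : ℝ) * U.card ≤ h := by linarith
    exact_mod_cast this
  suffices hs : ∃ N : Finset V, (∀ x ∈ N, x ∉ U ∧ ∃ v ∈ U, H.Adj x v) ∧ 2 * U.card ≤ N.card by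
    obtain ⟨N, hN, hc⟩ := hs
    have hsub : (N : Set V) ⊆ extNbhd H (U : Set V) := fun x hx => hN x hx
    have := Set.ncard_le_ncard hsub (Set.toFinite _)
    rw [Set.ncard_coe_finset] at this
    exact_mod_cast hc.trans this
  by_cases hUm : U.card ≤ m
  · exact aux_small H m d hm h1 h2a h2b h3 U hUm
  · refine ⟨Finset.univ.filter (fun x => x ∉ U ∧ ∃ v ∈ U, H.Adj x v), by simp, ?_⟩
    obtain ⟨N, hN⟩ : ∃ N, N = Finset.univ.filter (fun x => x ∉ U ∧ ∃ v ∈ U, H.Adj x v) := ⟨_, rfl⟩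
    rw [← hN]
    have hR : (U ∪ N)ᶜ.card < m := by
      by_contra hge
      push Not at hge
      obtain ⟨A, hA, hAc⟩ := Finset.exists_subset_card_eq hge
      obtain ⟨C, hC, hCc⟩ := Finset.exists_subset_card_eq (show m ≤ U.card by omega)
      have hdis : Disjoint C A := by
        rw [Finset.disjoint_left]
        intro x hx hxA
        have := hA hxA
        simp [hC hx] at this
      obtain ⟨u, hu, v, hv, huv⟩ := h4 C A hdis hCc hAc
      have := hA hv
      simp only [hN, Finset.mem_compl, Finset.mem_union, Finset.mem_filter, Finset.mem_univ,
        true_and, not_or] at this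
      exact this.2 ⟨this.1, u, hC hu, huv.symm⟩
    have h5 := Finset.card_compl_add_card (U ∪ N)
    have h6 := Finset.card_union_le U N
    omega
end
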